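/- Let ψ₀ : F_q → ℂ^× be a nontrivial character of the additive group of F_q, let m ≥ 1 be an integer and μ ∈ ℂ, and suppose that ε_χ^m = μ for every χ ∈ S_{n,q}. Then Σ ψ₀( Σ_{j=1}^m a_{n,j} ) = q^{m(n+1)/2 − 1} · μ, where the outer sum is over all arrays (a_{i,j}) ∈ F_q^{n·m} (1 ≤ i ≤ n, 1 ≤ j ≤ m) such that ∏_{j=1}^m (1 + Σ_{i=1}^n a_{i,j} x^i) ≡ 1 modulo x^{n+1} in F_q[x]. -/

import Mathlib

open Polynomial

noncomputable section

/-- The ring `F_q[x]/(x^(n+1))`. -/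
abbrev QuotR (F : Type) [Field F] (n : ℕ) : Type :=
  Polynomial F ⧸ Ideal.span {(Polynomial.X : Polynomial F) ^ (n + 1)}

/-- The quotient map `F_q[x] → F_q[x]/(x^(n+1))`. -/
def mkR (F : Type) [Field F] (n : ℕ) : Polynomial F →+* QuotR F n :=
  Ideal.Quotient.mk _

/-- A Dirichlet character modulo `x^(n+1)` is even if it is trivial on the constants. -/
def IsEvenChar (F : Type) [Field F] (n : ℕ) (ψ : MulChar (QuotR F n) ℂ) : Prop :=
  ∀ c : F, c ≠ 0 → ψ (mkR F n (Polynomial.C c)) = 1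

/-- A Dirichlet character modulo `x^(n+1)` is primitive if it is nontrivial on the
units congruent to `1` modulo `x^n` (which are exactly the `1 + a x^n`). -/
def IsPrimitiveChar (F : Type) [Field F] (n : ℕ) (ψ : MulChar (QuotR F n) ℂ) : Prop :=
  ∃ a : F, ψ (mkR F n (1 + Polynomial.C a * Polynomial.X ^ n)) ≠ 1

/-- The function `χ` on (monic) polynomials attached to a Dirichlet character `ψ`:
`χ(f) = ψ(f(x⁻¹) x^(deg f) mod x^(n+1))`. -/
def attachedChar (F : Type) [Field F] (n : ℕ) (ψ : MulChar (QuotR F n) ℂ) :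
    Polynomial F → ℂ :=
  fun f => ψ (mkR F n f.reverse)

/-- The family `S_{n,q}` of functions attached to primitive even Dirichlet characters. -/
def Snq (F : Type) [Field F] (n : ℕ) : Set (Polynomial F → ℂ) :=
  {χ | ∃ ψ : MulChar (QuotR F n) ℂ,
    IsEvenChar F n ψ ∧ IsPrimitiveChar F n ψ ∧ χ = attachedChar F n ψ}

/-- The sum of `χ(f)` over monic polynomials of degree `d`. -/
def coeffSum (F : Type) [Field F] (χ : Polynomial F → ℂ) (d : ℕ) : ℂ :=
  ∑ᶠ f ∈ {f : Polynomial F | f.Monic ∧ f.natDegree = d}, χ f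

/-- `λ_d(χ) = q^(-d/2) ∑_{f monic, deg f = d} χ(f)`. -/
def lam (F : Type) [Field F] [Fintype F] (χ : Polynomial F → ℂ) (d : ℕ) : ℂ :=
  ((((Fintype.card F : ℝ) ^ (-(d : ℝ) / 2) : ℝ)) : ℂ) * coeffSum F χ d

/-- The epsilon factor `ε_χ = λ_{n-1}(χ)`. -/
def epsFactor (F : Type) [Field F] [Fintype F] (n : ℕ) (χ : Polynomial F → ℂ) : ℂ :=
  lam F χ (n - 1)

/-- The L-function `L(s,χ) = ∑_{d=0}^{n-1} λ_d(χ) q^(d(1/2-s))`. -/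
def Lfun (F : Type) [Field F] [Fintype F] (n : ℕ) (χ : Polynomial F → ℂ) (s : ℂ) : ℂ :=
  ∑ d ∈ Finset.range n, lam F χ d * (Fintype.card F : ℂ) ^ ((d : ℂ) * (1 / 2 - s))

/-!
For a character `ψ` modulo `x^(n+1)`, consider the Gauss sum `G(ψ) = ∑_u ψ(u) ψ₀(u_n)` over the
units `u = 1 + u_1 x + ⋯ + u_n x^n`. Writing `u = v (1 + a x^n)` with `deg v < n` factors it as
`(∑_v ψ(v)) (∑_a ψ(1 + a x^n) ψ₀(a))`. The first factor is `q^((n-1)/2) ε_χ`; the second is `q` if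
`a ↦ ψ(1 + a x^n)` is the inverse of `ψ₀`, and `0` otherwise. By orthogonality the average of
`G(ψ)^m` over all `ψ` is the sum to be computed, while the `ψ` that contribute, all with
`ε_χ^m = μ`, make up a fraction `1/q` of all characters.
-/

section OneUnitPoly

variable {R : Type*} [Semiring R] {k : ℕ}

/-- The polynomial `1 + c₀ x + ⋯ + c_{k-1} x^k`, so that the coefficient of `x^(i+1)` is `c i`.
Reduced modulo `x^(k+1)`, these are the units congruent to `1` modulo `x`. -/
def oneUnitPoly (c : Fin k → R) : R[X] :=
  1 + ∑ i : Fin k, C (c i) * X ^ ((i : ℕ) + 1)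

theorem coeff_zero_oneUnitPoly (c : Fin k → R) : (oneUnitPoly c).coeff 0 = 1 := by
  simp [oneUnitPoly, coeff_X_pow]

theorem coeff_succ_oneUnitPoly (c : Fin k → R) (i : Fin k) :
    (oneUnitPoly c).coeff (i + 1) = c i := by
  simp [oneUnitPoly, coeff_X_pow, coeff_one, Fin.val_inj]

theorem natDegree_oneUnitPoly_le (c : Fin k → R) : (oneUnitPoly c).natDegree ≤ k :=
  (natDegree_add_le _ _).trans <| max_le (by simp) <|
    natDegree_sum_le_of_forall_le _ _ fun i _ =>
      (natDegree_C_mul_X_pow_le _ _).trans (Nat.succ_le_of_lt i.isLt)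

theorem oneUnitPoly_injective : Function.Injective (oneUnitPoly (R := R) (k := k)) := by
  intro c d hcd
  ext i
  rw [← coeff_succ_oneUnitPoly c i, hcd, coeff_succ_oneUnitPoly]

theorem oneUnitPoly_coeff_succ {f : R[X]} (h0 : f.coeff 0 = 1) (hdeg : f.natDegree ≤ k) :
    oneUnitPoly (fun i : Fin k => f.coeff (i + 1)) = f := by
  ext j
  rcases j with _ | j
  · rw [coeff_zero_oneUnitPoly, h0]
  · by_cases hj : j < k
    · exact coeff_succ_oneUnitPoly _ ⟨j, hj⟩
    · rw [coeff_eq_zero_of_natDegree_lt ((natDegree_oneUnitPoly_le _).trans_lt (by omega)),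
        coeff_eq_zero_of_natDegree_lt (hdeg.trans_lt (by omega))]

theorem oneUnitPoly_snoc (c : Fin k → R) (a : R) :
    oneUnitPoly (Fin.snoc c a : Fin (k + 1) → R) = oneUnitPoly c + C a * X ^ (k + 1) := by
  simp [oneUnitPoly, Fin.sum_univ_castSucc, add_assoc]

theorem coeff_reflect_oneUnitPoly (c : Fin k → R) : (reflect k (oneUnitPoly c)).coeff k = 1 := by
  rw [coeff_reflect, revAt_le le_rfl, Nat.sub_self, coeff_zero_oneUnitPoly]

variable [Nontrivial R]

theorem natDegree_reflect_oneUnitPoly (c : Fin k → R) :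
    (reflect k (oneUnitPoly c)).natDegree = k :=
  le_antisymm (natDegree_reflect_le.trans (max_le le_rfl (natDegree_oneUnitPoly_le c)))
    (le_natDegree_of_ne_zero (by rw [coeff_reflect_oneUnitPoly]; exact one_ne_zero))

theorem reverse_reflect_oneUnitPoly (c : Fin k → R) :
    (reflect k (oneUnitPoly c)).reverse = oneUnitPoly c := by
  rw [reverse, natDegree_reflect_oneUnitPoly, reflect_reflect]

theorem bijOn_reflect_oneUnitPoly :
    Set.BijOn (fun c : Fin k → R => reflect k (oneUnitPoly c)) Set.univ
      {f | f.Monic ∧ f.natDegree = k} := by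
  refine ⟨fun c _ => ⟨?_, natDegree_reflect_oneUnitPoly c⟩, fun c _ d _ hcd => ?_, ?_⟩
  · rw [Monic, leadingCoeff, natDegree_reflect_oneUnitPoly, coeff_reflect_oneUnitPoly]
  · apply oneUnitPoly_injective
    simpa only [reverse_reflect_oneUnitPoly] using congrArg reverse hcd
  · rintro f ⟨hmonic, rfl⟩
    refine ⟨fun i => f.reverse.coeff (i + 1), trivial, ?_⟩
    have hrev : oneUnitPoly (fun i : Fin f.natDegree => f.reverse.coeff (i + 1)) = f.reverse :=
      oneUnitPoly_coeff_succ (by rw [coeff_zero_reverse, hmonic.leadingCoeff])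
        (reverse_natDegree_le f)
    simp only [hrev]
    rw [reverse, reflect_reflect]

end OneUnitPoly

theorem addChar_apply_sum {A M ι : Type*} [AddCommMonoid A] [CommMonoid M] (ψ : AddChar A M)
    (s : Finset ι) (f : ι → A) : ψ (∑ i ∈ s, f i) = ∏ i ∈ s, ψ (f i) :=
  map_prod ψ.toMonoidHom (fun i => Multiplicative.ofAdd (f i)) s

section Orthogonality

variable {M R : Type*} [CommMonoid M] [Finite M] [CommRing R] [IsDomain R]
  [HasEnoughRootsOfUnity R (Monoid.exponent Mˣ)] [Fintype (MulChar M R)]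

theorem sum_mulChar_apply_eq_zero {r : M} (hr : r ≠ 1) : ∑ ψ : MulChar M R, ψ r = 0 := by
  obtain ⟨φ, hφ⟩ := MulChar.exists_apply_ne_one_of_hasEnoughRootsOfUnity M R hr
  refine eq_zero_of_mul_eq_self_left hφ ?_
  simp only [Finset.mul_sum, ← MulChar.mul_apply]
  exact Fintype.sum_bijective _ (Group.mulLeft_bijective φ) _ _ fun _ => rfl

theorem sum_mulChar_apply [DecidableEq M] (r : M) :
    ∑ ψ : MulChar M R, ψ r = if r = 1 then (Fintype.card (MulChar M R) : R) else 0 := by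
  split_ifs with hr
  · simp [hr]
  · exact sum_mulChar_apply_eq_zero hr

end Orthogonality

section TruncatedPolynomials

variable {F : Type} [Field F] {n k : ℕ}

instance finite_quotR [Finite F] (n : ℕ) : Finite (QuotR F n) :=
  have := (monic_X_pow (R := F) (n + 1)).finite_quotient
  Module.finite_of_finite F

theorem mkR_eq_mkR_iff {f g : F[X]} :
    mkR F n f = mkR F n g ↔ ∀ i ≤ n, f.coeff i = g.coeff i := by
  rw [mkR, Ideal.Quotient.eq, Ideal.mem_span_singleton, X_pow_dvd_iff]
  simp only [coeff_sub, sub_eq_zero, Nat.lt_succ_iff]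

theorem mkR_add_C_mul_X_pow {f : F[X]} (hf : f.coeff 0 = 1) (a : F) :
    mkR F n (f + C a * X ^ n) = mkR F n f * mkR F n (1 + C a * X ^ n) := by
  rw [← map_mul, mul_add, mul_one, ← mul_assoc, mkR_eq_mkR_iff]
  intro i hi
  rcases hi.eq_or_lt with rfl | hi
  · simp [coeff_mul_X_pow', hf]
  · simp [coeff_mul_X_pow', hi.not_ge]

theorem mkR_one_add_C_mul_X_pow_eq_one_iff {a : F} :
    mkR F n (1 + C a * X ^ n) = 1 ↔ a = 0 := by
  rw [← map_one (mkR F n), mkR_eq_mkR_iff]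
  refine ⟨fun h => by simpa using h n le_rfl, ?_⟩
  rintro rfl
  simp

theorem mkR_one_add_C_add_mul_X_pow_succ (a b : F) :
    mkR F (k + 1) (1 + C (a + b) * X ^ (k + 1)) =
      mkR F (k + 1) (1 + C a * X ^ (k + 1)) * mkR F (k + 1) (1 + C b * X ^ (k + 1)) := by
  rw [C_add, add_mul, ← add_assoc, mkR_add_C_mul_X_pow (by simp)]

theorem mkR_oneUnitPoly (c : Fin k → F) :
    mkR F n (oneUnitPoly c) = 1 + ∑ i : Fin k, mkR F n (C (c i) * X ^ ((i : ℕ) + 1)) := by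
  rw [oneUnitPoly, map_add, map_one, map_sum]

/-- The constant coefficient of a class modulo `x^(n+1)`. -/
def constCoeffR (F : Type) [Field F] (n : ℕ) : QuotR F n →+* F :=
  Ideal.Quotient.lift _ constantCoeff fun f hf => by
    obtain ⟨g, rfl⟩ := Ideal.mem_span_singleton.mp hf
    simp

theorem constCoeffR_mkR (f : F[X]) : constCoeffR F n (mkR F n f) = f.coeff 0 := by
  simp [constCoeffR, mkR]

end TruncatedPolynomials

section Characters

variable {F : Type} [Field F] {n k : ℕ}

/-- The even character that agrees with `ψ` on the units with constant coefficient `1`: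
it is `f ↦ ψ(f) / ψ(f(0))`. Since `ε` only sees such units, `ψ` can be replaced by it. -/
def evenPart (ψ : MulChar (QuotR F n) ℂ) : MulChar (QuotR F n) ℂ where
  toFun r := ψ r * (ψ (mkR F n (C (constCoeffR F n r))))⁻¹
  map_one' := by simp
  map_mul' a b := by
    simp only [map_mul, mul_inv]
    ring
  map_nonunit' a ha := by rw [ψ.map_nonunit ha, zero_mul]

theorem evenPart_apply (ψ : MulChar (QuotR F n) ℂ) (r : QuotR F n) :
    evenPart ψ r = ψ r * (ψ (mkR F n (C (constCoeffR F n r))))⁻¹ :=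
  rfl

theorem isEvenChar_evenPart (ψ : MulChar (QuotR F n) ℂ) : IsEvenChar F n (evenPart ψ) := by
  intro c hc
  have hunit : IsUnit (mkR F n (C c)) := ((isUnit_iff_ne_zero.mpr hc).map C).map (mkR F n)
  rw [evenPart_apply, constCoeffR_mkR, coeff_C_zero]
  exact mul_inv_cancel₀ (hunit.map ψ).ne_zero

theorem evenPart_mkR (ψ : MulChar (QuotR F n) ℂ) {f : F[X]} (hf : f.coeff 0 = 1) :
    evenPart ψ (mkR F n f) = ψ (mkR F n f) := by
  simp [evenPart_apply, constCoeffR_mkR, hf]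

/-- The restriction of a character modulo `x^(k+2)` to the units congruent to `1` modulo
`x^(k+1)`, viewed as the additive character `a ↦ ψ(1 + a x^(k+1))`. -/
def topAddChar (ψ : MulChar (QuotR F (k + 1)) ℂ) : AddChar F ℂ where
  toFun a := ψ (mkR F (k + 1) (1 + C a * X ^ (k + 1)))
  map_zero_eq_one' := by simp
  map_add_eq_mul' a b := by rw [mkR_one_add_C_add_mul_X_pow_succ, map_mul]

theorem topAddChar_apply (ψ : MulChar (QuotR F (k + 1)) ℂ) (a : F) :
    topAddChar ψ a = ψ (mkR F (k + 1) (1 + C a * X ^ (k + 1))) :=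
  rfl

theorem isPrimitiveChar_iff_topAddChar_ne_one {ψ : MulChar (QuotR F (k + 1)) ℂ} :
    IsPrimitiveChar F (k + 1) ψ ↔ topAddChar ψ ≠ 1 :=
  (AddChar.ne_one_iff (ψ := topAddChar ψ)).symm

theorem topAddChar_evenPart (ψ : MulChar (QuotR F (k + 1)) ℂ) :
    topAddChar (evenPart ψ) = topAddChar ψ := by
  ext a
  exact evenPart_mkR ψ (by simp)

theorem sum_topAddChar_apply [Finite F] [DecidableEq F]
    [Fintype (MulChar (QuotR F (k + 1)) ℂ)] (a : F) :
    ∑ ψ : MulChar (QuotR F (k + 1)) ℂ, topAddChar ψ a =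
      if a = 0 then (Fintype.card (MulChar (QuotR F (k + 1)) ℂ) : ℂ) else 0 := by
  classical
  simp only [topAddChar_apply, sum_mulChar_apply, mkR_one_add_C_mul_X_pow_eq_one_iff]

theorem sum_topAddChar_mul [Fintype F] (ψ : MulChar (QuotR F (k + 1)) ℂ) (ψ₀ : AddChar F ℂ) :
    ∑ a : F, topAddChar ψ a * ψ₀ a =
      if topAddChar ψ = ψ₀⁻¹ then (Fintype.card F : ℂ) else 0 := by
  simp only [eq_inv_iff_mul_eq_one, ← AddChar.mul_apply]
  exact AddChar.sum_eq_ite (topAddChar ψ * ψ₀)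

theorem card_mul_card_topAddChar_eq_inv [Fintype F] [Fintype (MulChar (QuotR F (k + 1)) ℂ)]
    (ψ₀ : AddChar F ℂ) :
    (Fintype.card F : ℂ) *
        ({ψ | topAddChar ψ = ψ₀⁻¹} : Finset (MulChar (QuotR F (k + 1)) ℂ)).card =
      Fintype.card (MulChar (QuotR F (k + 1)) ℂ) := by
  classical
  calc (Fintype.card F : ℂ) *
        ({ψ | topAddChar ψ = ψ₀⁻¹} : Finset (MulChar (QuotR F (k + 1)) ℂ)).card
      = ∑ ψ : MulChar (QuotR F (k + 1)) ℂ, ∑ a : F, topAddChar ψ a * ψ₀ a := by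
        simp only [sum_topAddChar_mul]
        rw [← Finset.sum_filter, Finset.sum_const, nsmul_eq_mul, mul_comm]
    _ = ∑ a : F, (∑ ψ : MulChar (QuotR F (k + 1)) ℂ, topAddChar ψ a) * ψ₀ a := by
        rw [Finset.sum_comm]
        simp only [Finset.sum_mul]
    _ = Fintype.card (MulChar (QuotR F (k + 1)) ℂ) := by
        simp [sum_topAddChar_apply]

end Characters

section EpsilonFactors

variable {F : Type} [Field F] [Fintype F] {n k : ℕ}

theorem coeffSum_attachedChar (ψ : MulChar (QuotR F n) ℂ) (d : ℕ) :
    coeffSum F (attachedChar F n ψ) d = ∑ c : Fin d → F, ψ (mkR F n (oneUnitPoly c)) := by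
  rw [coeffSum, ← finsum_eq_sum_of_fintype,
    ← finsum_mem_univ fun c : Fin d → F => ψ (mkR F n (oneUnitPoly c))]
  refine (finsum_mem_eq_of_bijOn _ (bijOn_reflect_oneUnitPoly (R := F)) fun c _ => ?_).symm
  rw [attachedChar, reverse_reflect_oneUnitPoly]

theorem epsFactor_attachedChar_evenPart (ψ : MulChar (QuotR F n) ℂ) :
    epsFactor F n (attachedChar F n (evenPart ψ)) = epsFactor F n (attachedChar F n ψ) := by
  simp only [epsFactor, lam, coeffSum_attachedChar, evenPart_mkR _ (coeff_zero_oneUnitPoly _)]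

/-- The Gauss sum `∑_u ψ(u) ψ₀(u_{k+1})` over the units `u = 1 + u₁ x + ⋯ + u_{k+1} x^(k+1)`
modulo `x^(k+2)`. -/
def oneUnitGaussSum (ψ₀ : AddChar F ℂ) (ψ : MulChar (QuotR F (k + 1)) ℂ) : ℂ :=
  ∑ b : Fin (k + 1) → F, ψ (mkR F (k + 1) (oneUnitPoly b)) * ψ₀ (b (Fin.last k))

theorem oneUnitGaussSum_eq_coeffSum_mul (ψ₀ : AddChar F ℂ) (ψ : MulChar (QuotR F (k + 1)) ℂ) :
    oneUnitGaussSum ψ₀ ψ =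
      coeffSum F (attachedChar F (k + 1) ψ) k * ∑ a : F, topAddChar ψ a * ψ₀ a := by
  have hsnoc (c : Fin k → F) (a : F) :
      ψ (mkR F (k + 1) (oneUnitPoly (Fin.snoc c a : Fin (k + 1) → F))) =
        ψ (mkR F (k + 1) (oneUnitPoly c)) * topAddChar ψ a := by
    rw [oneUnitPoly_snoc, mkR_add_C_mul_X_pow (coeff_zero_oneUnitPoly c), map_mul,
      topAddChar_apply]
  rw [coeffSum_attachedChar, Finset.sum_mul_sum, oneUnitGaussSum,
    ← Equiv.sum_comp (Fin.snocEquiv fun _ => F), Fintype.sum_prod_type, Finset.sum_comm]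
  refine Finset.sum_congr rfl fun c _ => Finset.sum_congr rfl fun a _ => ?_
  simp [← mul_assoc, ← hsnoc, Fin.snocEquiv]

theorem coeffSum_mul_card (χ : F[X] → ℂ) :
    coeffSum F χ k * Fintype.card F =
      (((Fintype.card F : ℝ) ^ (((k : ℝ) + 2) / 2) : ℝ) : ℂ) * epsFactor F (k + 1) χ := by
  have hq : (0 : ℝ) < Fintype.card F := by exact_mod_cast Fintype.card_pos
  have hpow : (Fintype.card F : ℝ) ^ (((k : ℝ) + 2) / 2) * (Fintype.card F : ℝ) ^ (-(k : ℝ) / 2) =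
      Fintype.card F := by
    rw [← Real.rpow_add hq, ← add_div]
    simp
  rw [epsFactor, lam, Nat.add_sub_cancel, ← mul_assoc, ← Complex.ofReal_mul, hpow,
    Complex.ofReal_natCast, mul_comm]

theorem oneUnitGaussSum_eq_ite (ψ₀ : AddChar F ℂ) (ψ : MulChar (QuotR F (k + 1)) ℂ) :
    oneUnitGaussSum ψ₀ ψ =
      if topAddChar ψ = ψ₀⁻¹ then
        (((Fintype.card F : ℝ) ^ (((k : ℝ) + 2) / 2) : ℝ) : ℂ) *
          epsFactor F (k + 1) (attachedChar F (k + 1) ψ)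
      else 0 := by
  rw [oneUnitGaussSum_eq_coeffSum_mul, sum_topAddChar_mul, mul_ite, mul_zero, coeffSum_mul_card]

end EpsilonFactors

section KloostermanSums

variable {F : Type} [Field F] [Fintype F] {k m : ℕ}

/-- The Kloosterman-type sum of `ψ₀(∑_j a_{k+1,j})` over the `m`-tuples of units congruent to `1`
modulo `x`, with coefficients `a_{i,j}`, whose product is `1` modulo `x^(k+2)`. The index
`i : Fin (k + 1)` stands for the coefficient of `x^(i+1)`. -/
def kloostermanSum (ψ₀ : AddChar F ℂ) (k m : ℕ) : ℂ :=
  ∑ᶠ a ∈ {a : Fin (k + 1) → Fin m → F |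
      ∏ j : Fin m, mkR F (k + 1) (oneUnitPoly fun i => a i j) = 1},
    ψ₀ (∑ j : Fin m, a (Fin.last k) j)

theorem oneUnitGaussSum_pow (ψ₀ : AddChar F ℂ) (ψ : MulChar (QuotR F (k + 1)) ℂ) (m : ℕ) :
    oneUnitGaussSum ψ₀ ψ ^ m =
      ∑ a : Fin (k + 1) → Fin m → F,
        ψ (∏ j, mkR F (k + 1) (oneUnitPoly fun i => a i j)) * ψ₀ (∑ j, a (Fin.last k) j) := by
  rw [oneUnitGaussSum, Finset.sum_pow', Fintype.piFinset_univ,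
    ← Equiv.sum_comp (Equiv.piComm fun (_ : Fin (k + 1)) (_ : Fin m) => F)]
  simp only [Finset.prod_mul_distrib, map_prod, addChar_apply_sum, Equiv.piComm_apply]
  rfl

theorem sum_oneUnitGaussSum_pow [Fintype (MulChar (QuotR F (k + 1)) ℂ)] (ψ₀ : AddChar F ℂ)
    (m : ℕ) :
    ∑ ψ : MulChar (QuotR F (k + 1)) ℂ, oneUnitGaussSum ψ₀ ψ ^ m =
      Fintype.card (MulChar (QuotR F (k + 1)) ℂ) * kloostermanSum ψ₀ k m := by
  classical
  simp only [oneUnitGaussSum_pow]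
  rw [Finset.sum_comm, kloostermanSum, finsum_mem_eq_finite_toFinset_sum _ (Set.toFinite _),
    Finset.mul_sum]
  simp only [← Finset.sum_mul, sum_mulChar_apply, ite_mul, zero_mul, ← Finset.sum_filter,
    Set.toFinite_toFinset, Set.toFinset_ofPred]

theorem card_mul_kloostermanSum [Fintype (MulChar (QuotR F (k + 1)) ℂ)] (hm : m ≠ 0)
    (ψ₀ : AddChar F ℂ) :
    Fintype.card (MulChar (QuotR F (k + 1)) ℂ) * kloostermanSum ψ₀ k m =
      (((Fintype.card F : ℝ) ^ ((m : ℝ) * ((k : ℝ) + 2) / 2) : ℝ) : ℂ) *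
        ∑ ψ : MulChar (QuotR F (k + 1)) ℂ with topAddChar ψ = ψ₀⁻¹,
          epsFactor F (k + 1) (attachedChar F (k + 1) ψ) ^ m := by
  have hpow : (Fintype.card F : ℝ) ^ ((m : ℝ) * ((k : ℝ) + 2) / 2) =
      ((Fintype.card F : ℝ) ^ (((k : ℝ) + 2) / 2)) ^ m := by
    rw [← Real.rpow_mul_natCast (Nat.cast_nonneg _)]
    congr 1
    ring
  rw [← sum_oneUnitGaussSum_pow, hpow, Finset.mul_sum, Finset.sum_filter]
  simp only [oneUnitGaussSum_eq_ite, ite_pow, mul_pow, zero_pow hm, Complex.ofReal_pow]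

theorem statement16_general (hm : m ≠ 0) (ψ₀ : AddChar F ℂ) (μ : ℂ)
    (h : ∀ ψ : MulChar (QuotR F (k + 1)) ℂ, IsEvenChar F (k + 1) ψ → topAddChar ψ = ψ₀⁻¹ →
      epsFactor F (k + 1) (attachedChar F (k + 1) ψ) ^ m = μ) :
    kloostermanSum ψ₀ k m =
      (((Fintype.card F : ℝ) ^ ((m : ℝ) * (((k + 1 : ℕ) : ℝ) + 1) / 2 - 1) : ℝ) : ℂ) * μ := by
  have : Fintype (MulChar (QuotR F (k + 1)) ℂ) := Fintype.ofFinite _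
  have hq : (Fintype.card F : ℝ) ≠ 0 := by exact_mod_cast Fintype.card_ne_zero
  have hX : (Fintype.card (MulChar (QuotR F (k + 1)) ℂ) : ℂ) ≠ 0 := by
    exact_mod_cast Fintype.card_ne_zero
  have hε (ψ : MulChar (QuotR F (k + 1)) ℂ) (hψ : topAddChar ψ = ψ₀⁻¹) :
      epsFactor F (k + 1) (attachedChar F (k + 1) ψ) ^ m = μ := by
    rw [← epsFactor_attachedChar_evenPart]
    exact h _ (isEvenChar_evenPart ψ) (by rw [topAddChar_evenPart, hψ])
  have hpow : (Fintype.card F : ℝ) ^ ((m : ℝ) * ((k : ℝ) + 2) / 2) =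
      (Fintype.card F : ℝ) ^ ((m : ℝ) * (((k + 1 : ℕ) : ℝ) + 1) / 2 - 1) * Fintype.card F := by
    rw [Real.rpow_sub_one hq, div_mul_cancel₀ _ hq]
    push_cast
    ring_nf
  apply mul_left_cancel₀ hX
  rw [card_mul_kloostermanSum hm, Finset.sum_congr rfl fun ψ hψ => hε ψ (Finset.mem_filter.mp hψ).2,
    Finset.sum_const, nsmul_eq_mul, ← card_mul_card_topAddChar_eq_inv ψ₀, hpow]
  push_cast
  ring

end KloostermanSums

/-- if `ε_χ^m = μ` for all `χ ∈ S_{n,q}` then, for any nontrivial additive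
character `ψ₀` of `F_q`, the Kloosterman-type sum
`∑ ψ₀(∑_j a_{n,j})` over arrays `(a_{i,j})` with `∏_j (1 + ∑_i a_{i,j} x^i) ≡ 1 mod x^(n+1)`
equals `q^(m(n+1)/2 - 1) μ`. -/
theorem statement16 (p : ℕ) (hp : p.Prime) (F : Type) [Field F] [Fintype F] (hchar : CharP F p)
    (n : ℕ) (hn : 1 ≤ n) (ψ₀ : AddChar F ℂ) (hψ₀ : ψ₀ ≠ 1)
    (m : ℕ) (hm : 1 ≤ m) (μ : ℂ)
    (h : ∀ χ ∈ Snq F n, epsFactor F n χ ^ m = μ) :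
    (∑ᶠ a ∈ {a : Fin n → Fin m → F |
        ∏ j : Fin m,
          (1 + ∑ i : Fin n, mkR F n (Polynomial.C (a i j) * Polynomial.X ^ ((i : ℕ) + 1))) = 1},
      ψ₀ (∑ j : Fin m, a (⟨n - 1, by omega⟩ : Fin n) j)) =
    ((((Fintype.card F : ℝ) ^ (((m : ℝ) * ((n : ℝ) + 1)) / 2 - 1) : ℝ)) : ℂ) * μ := by
  obtain ⟨k, rfl⟩ := Nat.exists_eq_add_of_le' hn
  have hsum := statement16_general (Nat.one_le_iff_ne_zero.mp hm) ψ₀ μ fun ψ heven htop =>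
    h _ ⟨ψ, heven, isPrimitiveChar_iff_topAddChar_ne_one.mpr (by rwa [htop, inv_ne_one]), rfl⟩
  simp only [kloostermanSum, mkR_oneUnitPoly] at hsum
  exact hsum

end
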